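/- For every odd integer m ≥ 9, the incidence graph of points and lines of ℙ²(𝔽₄) contains no induced subgraph isomorphic to the extended Dynkin diagram D̃ₘ. -/

import Mathlib

/-- The field with four elements. -/
abbrev F4 : Type := GaloisField 2 2

/-- The vector space `𝔽₄³`. -/
abbrev V3 : Type := Fin 3 → F4

/-- Points of `ℙ²(𝔽₄)`: 1-dimensional linear subspaces of `𝔽₄³`. -/
abbrev ProjPoint : Type := {P : Submodule F4 V3 // Module.finrank F4 P = 1}

/-- Lines of `ℙ²(𝔽₄)`: 2-dimensional linear subspaces of `𝔽₄³`. -/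
abbrev ProjLine : Type := {L : Submodule F4 V3 // Module.finrank F4 L = 2}

/-- The incidence relation: a point is adjacent to a line iff the point lies on the line. -/
def IncAdj : ProjPoint ⊕ ProjLine → ProjPoint ⊕ ProjLine → Prop
  | Sum.inl p, Sum.inr l => p.1 ≤ l.1
  | Sum.inr l, Sum.inl p => p.1 ≤ l.1
  | _, _ => False

/-- The incidence graph of points and lines of `ℙ²(𝔽₄)`. -/
def IncGraph : SimpleGraph (ProjPoint ⊕ ProjLine) where
  Adj := IncAdj
  symm := ⟨by rintro (p | l) (q | m) h <;> first | exact h.elim | exact h⟩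
  loopless := ⟨by rintro (p | l) h <;> exact h.elim⟩

/-- The (oriented) edges of the extended Dynkin diagram `D̃ₙ` on `{0, 1, …, n}`:
`{0,2}`, `{1,2}`, `{i,i+1}` for `2 ≤ i ≤ n-3`, `{n-2,n-1}` and `{n-2,n}`. -/
def DTAdj (n : ℕ) (a b : ℕ) : Prop :=
  (a = 0 ∧ b = 2) ∨ (a = 1 ∧ b = 2) ∨ (2 ≤ a ∧ a ≤ n - 3 ∧ b = a + 1) ∨
    (a = n - 2 ∧ b = n - 1) ∨ (a = n - 2 ∧ b = n)

/-- The extended Dynkin diagram `D̃ₙ` as a simple graph on `n + 1` vertices.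
(For `n ≥ 4` the vertices occurring in `DTAdj` are always distinct, so the
`a ≠ b` conjunct is redundant; it merely makes the graph loopless for all `n`.) -/
def DTilde (n : ℕ) : SimpleGraph (Fin (n + 1)) where
  Adj a b := a ≠ b ∧ (DTAdj n a.1 b.1 ∨ DTAdj n b.1 a.1)
  symm := ⟨fun _ _ h => ⟨h.1.symm, h.2.symm⟩⟩
  loopless := ⟨fun _ h => h.1 rfl⟩

/-- A simple graph `G` contains an induced subgraph isomorphic to `H` if there is an
injective map on vertices transporting adjacency in `H` exactly to adjacency in `G`. -/
def HasInducedCopy {α β : Type*} (H : SimpleGraph α) (G : SimpleGraph β) : Prop :=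
  ∃ f : α → β, Function.Injective f ∧ ∀ a b : α, G.Adj (f a) (f b) ↔ H.Adj a b

/-!
Let `p` be a point off a line `l`. Distinct lines through `p` meet `l` in distinct points, so the
lines of a set `s` through `p`, together with a set `t` of points of `l` on none of these lines,
account for `#s + #t` points of `l`. The two branch vertices of `D̃ₘ` have degree three and are
joined by a path of length `m - 4`. For odd `m` one of them is thus a point and the other a line,
and for `m ≥ 9` no edge joins them, nor their neighbourhoods: an induced copy of `D̃ₘ` would give
a line with `3 + 3` points, whereas the lines of `ℙ²(𝔽₄)` have five.
-/

open Configuration Module Finset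

section Graphs

variable {V W : Type*} {G : SimpleGraph V} {H : SimpleGraph W} {u v : V} {s t : Finset V}

/-- Two stars in `G`, with centres `u`, `v` and leaves `s`, `t`, such that no edge joins the
centres and no edge joins a leaf of one to a leaf of the other. Nothing is required of the pairs
formed by a centre and a leaf of the other star. -/
structure SeparatedStars (G : SimpleGraph V) (u v : V) (s t : Finset V) : Prop where
  adj_left : ∀ x ∈ s, G.Adj u x
  adj_right : ∀ y ∈ t, G.Adj v y
  not_adj_centres : ¬ G.Adj u v
  not_adj_leaves : ∀ x ∈ s, ∀ y ∈ t, ¬ G.Adj x y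

namespace SeparatedStars

lemma symm (h : SeparatedStars G u v s t) : SeparatedStars G v u t s where
  adj_left := h.adj_right
  adj_right := h.adj_left
  not_adj_centres hvu := h.not_adj_centres hvu.symm
  not_adj_leaves y hy x hx hyx := h.not_adj_leaves x hx y hy hyx.symm

lemma map (h : SeparatedStars G u v s t) (f : G ↪g H) :
    SeparatedStars H (f u) (f v) (s.map f.toEmbedding) (t.map f.toEmbedding) where
  adj_left := forall_mem_map.2 fun x hx ↦ f.map_adj_iff.2 (h.adj_left x hx)
  adj_right := forall_mem_map.2 fun y hy ↦ f.map_adj_iff.2 (h.adj_right y hy)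
  not_adj_centres := f.map_adj_iff.not.2 h.not_adj_centres
  not_adj_leaves := forall_mem_map.2 fun x hx ↦ forall_mem_map.2 fun y hy ↦
    f.map_adj_iff.not.2 (h.not_adj_leaves x hx y hy)

end SeparatedStars

lemma HasInducedCopy.isIndContained (h : HasInducedCopy G H) : G.IsIndContained H :=
  let ⟨f, f_injective, f_adj⟩ := h
  ⟨⟨⟨f, f_injective⟩, f_adj _ _⟩⟩

lemma coloring_ne_of_odd_length (c : G.Coloring Bool) (w : G.Walk u v) (hw : Odd w.length) :
    c u ≠ c v := by
  have := (c.odd_length_iff_not_congr w).1 hw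
  grind

end Graphs

section Dynkin

variable {m : ℕ}

lemma dTilde_adj_mk {a b : ℕ} {ha : a < m + 1} {hb : b < m + 1} :
    (DTilde m).Adj ⟨a, ha⟩ ⟨b, hb⟩ ↔ a ≠ b ∧ (DTAdj m a b ∨ DTAdj m b a) := by
  simp [DTilde]

lemma dTilde_adj_succ {i : ℕ} (hi : i + 5 ≤ m) :
    (DTilde m).Adj ⟨i + 2, by omega⟩ ⟨i + 3, by omega⟩ := by
  rw [dTilde_adj_mk, DTAdj, DTAdj]
  omega

lemma exists_dTilde_walk_length_eq {i : ℕ} (hi : i + 4 ≤ m) :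
    ∃ w : (DTilde m).Walk ⟨2, by omega⟩ ⟨i + 2, by omega⟩, w.length = i := by
  induction i with
  | zero => exact ⟨.nil, rfl⟩
  | succ i ih =>
    obtain ⟨w, hw⟩ := ih (by omega)
    exact ⟨w.concat (dTilde_adj_succ (by omega)), by rw [SimpleGraph.Walk.length_concat, hw]⟩

lemma dTilde_separatedStars (hm : 8 ≤ m) :
    SeparatedStars (DTilde m) ⟨2, by omega⟩ ⟨m - 2, by omega⟩
      {⟨0, by omega⟩, ⟨1, by omega⟩, ⟨3, by omega⟩}
      {⟨m - 3, by omega⟩, ⟨m - 1, by omega⟩, ⟨m, by omega⟩} := by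
  constructor <;>
    simp only [mem_insert, mem_singleton, forall_eq_or_imp, forall_eq, dTilde_adj_mk] <;>
    unfold DTAdj <;>
    omega

lemma exists_dTilde_separatedStars (hm : 9 ≤ m) (hodd : Odd m) :
    ∃ (u v : Fin (m + 1)) (s t : Finset (Fin (m + 1))) (w : (DTilde m).Walk u v),
      SeparatedStars (DTilde m) u v s t ∧ #s = 3 ∧ #t = 3 ∧ Odd w.length := by
  obtain ⟨w, hw⟩ := exists_dTilde_walk_length_eq (m := m) (i := m - 4) (by omega)
  have hv : (⟨m - 4 + 2, by omega⟩ : Fin (m + 1)) = ⟨m - 2, by omega⟩ := Fin.ext (by grind)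
  refine ⟨_, _, _, _, w.copy rfl hv, dTilde_separatedStars (by omega), ?_, ?_, ?_⟩
  · exact card_eq_three.2 ⟨_, _, _, by grind, by grind, by grind, rfl⟩
  · exact card_eq_three.2 ⟨_, _, _, by grind, by grind, by grind, rfl⟩
  · rw [SimpleGraph.Walk.length_copy, hw]
    exact Nat.Odd.sub_even (by omega) hodd (by decide)

end Dynkin

section Incidence

variable (P L : Type*) [Membership P L]

/-- The incidence graph of a configuration of points and lines. -/
def incidenceGraph : SimpleGraph (P ⊕ L) where
  Adj
    | .inl p, .inr l => p ∈ l
    | .inr l, .inl p => p ∈ l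
    | _, _ => False
  symm := ⟨by rintro (p | l) (q | k) h <;> exact h⟩
  loopless := ⟨by rintro (p | l) h <;> exact h⟩

/-- The bipartition of the incidence graph: points are coloured `true`, lines `false`. -/
def incidenceColoring : (incidenceGraph P L).Coloring Bool :=
  .mk Sum.isLeft (by rintro (p | l) (q | k) h <;> first | exact h.elim | simp)

variable {P L} [HasPoints P L]

lemma eq_of_mkPoint_eq_mkPoint {p : P} {k k' l : L} (hpl : p ∉ l) (hk : p ∈ k) (hk' : p ∈ k')
    (hkl : k ≠ l) (hkl' : k' ≠ l)
    (h : (HasPoints.mkPoint hkl : P) = HasPoints.mkPoint hkl') : k = k' := by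
  have hq := HasPoints.mkPoint_ax (P := P) hkl
  have hq' := h ▸ (HasPoints.mkPoint_ax (P := P) hkl').1
  exact (Nondegenerate.eq_or_eq hk hq.1 hk' hq').resolve_left fun hpq ↦ hpl (hpq ▸ hq.2)

variable [Finite P]

lemma card_lines_add_card_points_le_pointCount {p : P} {l : L} {s : Finset L} {t : Finset P}
    (hpl : p ∉ l) (hs : ∀ k ∈ s, p ∈ k) (ht : ∀ q ∈ t, q ∈ l)
    (hst : ∀ k ∈ s, ∀ q ∈ t, q ∉ k) : #s + #t ≤ pointCount P l := by
  have ne_l (k : s) : (k : L) ≠ l := fun h ↦ hpl (h ▸ hs k k.2)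
  let meet (k : s) : {q : P // q ∈ l} :=
    ⟨HasPoints.mkPoint (ne_l k), (HasPoints.mkPoint_ax (ne_l k)).2⟩
  let incl (q : t) : {q : P // q ∈ l} := ⟨q, ht q q.2⟩
  have meet_injective : Function.Injective meet := fun k k' h ↦ Subtype.ext <|
    eq_of_mkPoint_eq_mkPoint hpl (hs k k.2) (hs k' k'.2) (ne_l k) (ne_l k')
      (congrArg Subtype.val h)
  have incl_injective : Function.Injective incl := fun _ _ h ↦
    Subtype.ext (Subtype.mk.inj h)
  have meet_ne_incl (k : s) (q : t) : meet k ≠ incl q := fun h ↦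
    hst k k.2 q q.2 (congrArg Subtype.val h ▸ (HasPoints.mkPoint_ax (ne_l k)).1)
  calc
    #s + #t = Nat.card (s ⊕ t) := by simp
    _ ≤ pointCount P l := Nat.card_le_card_of_injective _
      (meet_injective.sumElim incl_injective meet_ne_incl)

lemma SeparatedStars.card_add_card_le_pointCount {p : P} {l : L} {s t : Finset (P ⊕ L)}
    (h : SeparatedStars (incidenceGraph P L) (.inl p) (.inr l) s t) :
    #s + #t ≤ pointCount P l := by
  have s_lines : s.toLeft = ∅ := eq_empty_of_forall_notMem fun q hq ↦
    h.adj_left (.inl q) (mem_toLeft.1 hq)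
  have t_points : t.toRight = ∅ := eq_empty_of_forall_notMem fun k hk ↦
    h.adj_right (.inr k) (mem_toRight.1 hk)
  rw [← card_toLeft_add_card_toRight (u := s), ← card_toLeft_add_card_toRight (u := t), s_lines,
    t_points, card_empty, card_empty, zero_add, add_zero]
  exact card_lines_add_card_points_le_pointCount h.not_adj_centres
    (fun k hk ↦ h.adj_left _ (mem_toRight.1 hk)) (fun q hq ↦ h.adj_right _ (mem_toLeft.1 hq))
    fun k hk q hq ↦ h.not_adj_leaves _ (mem_toRight.1 hk) _ (mem_toLeft.1 hq)

lemma SeparatedStars.card_add_card_le {n : ℕ} (hn : ∀ l : L, pointCount P l ≤ n)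
    {u v : P ⊕ L} {s t : Finset (P ⊕ L)} (h : SeparatedStars (incidenceGraph P L) u v s t)
    (huv : incidenceColoring P L u ≠ incidenceColoring P L v) : #s + #t ≤ n := by
  rcases u with p | k <;> rcases v with q | l
  · exact absurd rfl huv
  · exact h.card_add_card_le_pointCount.trans (hn l)
  · exact (add_comm _ _).trans_le (h.symm.card_add_card_le_pointCount.trans (hn k))
  · exact absurd rfl huv

end Incidence

section Subspaces

variable {K V : Type*} [DivisionRing K] [AddCommGroup V] [Module K V]

/-- The `n`-dimensional subspaces of `V`; for `n = 1` and `n = 2` these are the points and lines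
of the projective space of `V`. -/
abbrev SubspaceOfFinrank (K V : Type*) [DivisionRing K] [AddCommGroup V] [Module K V] (n : ℕ) :
    Type _ :=
  {W : Submodule K V // finrank K W = n}

instance : Membership (SubspaceOfFinrank K V 1) (SubspaceOfFinrank K V 2) where
  mem l p := p.1 ≤ l.1

lemma pointCount_subspaceOfFinrank [Finite K] (l : SubspaceOfFinrank K V 2) :
    pointCount (SubspaceOfFinrank K V 1) l = Nat.card K + 1 := by
  let e : SubspaceOfFinrank K l.1 1 ≃ {p : SubspaceOfFinrank K V 1 // p ∈ l} :=
    calc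
      _ ≃ {W : Set.Iic l.1 // finrank K W.1 = 1} :=
        (Submodule.mapIic l.1).toEquiv.subtypeEquiv fun W ↦ by
          rw [← Submodule.finrank_map_subtype_eq l.1 W]; rfl
      _ ≃ {W : Submodule K V // W ≤ l.1 ∧ finrank K W = 1} :=
        Equiv.subtypeSubtypeEquivSubtypeInter (· ≤ l.1) (finrank K · = 1)
      _ ≃ {W : Submodule K V // finrank K W = 1 ∧ W ≤ l.1} :=
        Equiv.subtypeEquivRight fun _ ↦ and_comm
      _ ≃ {p : SubspaceOfFinrank K V 1 // p ∈ l} :=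
        (Equiv.subtypeSubtypeEquivSubtypeInter (fun W : Submodule K V ↦ finrank K W = 1)
          (· ≤ l.1)).symm
  calc
    pointCount (SubspaceOfFinrank K V 1) l = Nat.card (Projectivization K l.1) :=
      Nat.card_congr (e.symm.trans (Projectivization.equivSubmodule K l.1).symm)
    _ = Nat.card K + 1 := Projectivization.card_of_finrank_two K l.1 l.2

lemma exists_isCompl_of_finrank_eq_add [FiniteDimensional K V] {n k : ℕ}
    (hV : finrank K V = n + k) (U : SubspaceOfFinrank K V n) :
    ∃ W : SubspaceOfFinrank K V k, IsCompl U.1 W.1 := by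
  obtain ⟨W, hW⟩ := U.1.exists_isCompl
  have h_add := Submodule.finrank_add_eq_of_isCompl hW
  rw [U.2, hV] at h_add
  exact ⟨⟨W, Nat.add_left_cancel h_add⟩, hW⟩

lemma notMem_of_disjoint {p : SubspaceOfFinrank K V 1} {l : SubspaceOfFinrank K V 2}
    (h : Disjoint p.1 l.1) : p ∉ l := fun hpl ↦ by
  have hp := p.2
  rw [h.eq_bot_of_le hpl, finrank_bot] at hp
  exact zero_ne_one hp

lemma finrank_inf_eq_of_finrank_eq_add_one [FiniteDimensional K V] {n : ℕ}
    (hV : finrank K V = n + 2) {A B : Submodule K V} (hA : finrank K A = n + 1)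
    (hB : finrank K B = n + 1) (hAB : A ≠ B) : finrank K (A ⊓ B : Submodule K V) = n := by
  have inf_lt : A ⊓ B < A := inf_lt_left.2 fun hle ↦
    hAB (Submodule.eq_of_le_of_finrank_eq hle (hA.trans hB.symm))
  have h_lt := Submodule.finrank_lt_finrank_of_lt inf_lt
  have h_add := Submodule.finrank_sup_add_finrank_inf_eq A B
  have h_sup := Submodule.finrank_le (A ⊔ B)
  omega

lemma finrank_inf_eq_one [hV : Fact (finrank K V = 3)] {k l : SubspaceOfFinrank K V 2}
    (hkl : k ≠ l) : finrank K (k.1 ⊓ l.1 : Submodule K V) = 1 :=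
  have := finite_of_finrank_eq_succ hV.out
  finrank_inf_eq_of_finrank_eq_add_one hV.out k.2 l.2 (Subtype.coe_injective.ne hkl)

noncomputable instance [hV : Fact (finrank K V = 3)] :
    HasPoints (SubspaceOfFinrank K V 1) (SubspaceOfFinrank K V 2) where
  exists_point l := by
    have := finite_of_finrank_eq_succ hV.out
    obtain ⟨p, hp⟩ := exists_isCompl_of_finrank_eq_add (k := 1) hV.out l
    exact ⟨p, notMem_of_disjoint hp.disjoint.symm⟩
  exists_line p := by
    have := finite_of_finrank_eq_succ hV.out
    obtain ⟨l, hl⟩ := exists_isCompl_of_finrank_eq_add (k := 2) hV.out p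
    exact ⟨l, notMem_of_disjoint hl.disjoint⟩
  eq_or_eq {p q k l} hpk hqk hpl hql := by
    refine or_iff_not_imp_right.2 fun hkl ↦ Subtype.ext ?_
    have h_inf := finrank_inf_eq_one hkl
    have := finite_of_finrank_eq_succ h_inf
    calc
      p.1 = k.1 ⊓ l.1 :=
        Submodule.eq_of_le_of_finrank_eq (le_inf hpk hpl) (p.2.trans h_inf.symm)
      _ = q.1 :=
        (Submodule.eq_of_le_of_finrank_eq (le_inf hqk hql) (q.2.trans h_inf.symm)).symm
  mkPoint {k l} hkl := ⟨k.1 ⊓ l.1, finrank_inf_eq_one hkl⟩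
  mkPoint_ax _ := ⟨inf_le_left, inf_le_right⟩

end Subspaces

instance : Fact (finrank F4 V3 = 3) := ⟨by simp⟩

lemma pointCount_projLine (l : ProjLine) : pointCount ProjPoint l = 5 := by
  rw [pointCount_subspaceOfFinrank, GaloisField.card 2 2 two_ne_zero]
  norm_num

lemma incGraph_eq_incidenceGraph : IncGraph = incidenceGraph ProjPoint ProjLine := by
  ext (p | l) (q | k) <;> rfl

theorem no_induced_DTilde_odd_general {P L : Type*} [Membership P L] [HasPoints P L] [Finite P]
    (hcount : ∀ l : L, pointCount P l ≤ 5) (m : ℕ) (hm : 9 ≤ m) (hodd : Odd m) :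
    ¬ HasInducedCopy (DTilde m) (incidenceGraph P L) := by
  intro hcopy
  obtain ⟨f⟩ := hcopy.isIndContained
  obtain ⟨u, v, s, t, w, hstars, hs, ht, hw⟩ := exists_dTilde_separatedStars hm hodd
  have hsides : incidenceColoring P L (f u) ≠ incidenceColoring P L (f v) :=
    coloring_ne_of_odd_length _ (w.map f.toHom) (by rwa [SimpleGraph.Walk.length_map])
  have hcard := (hstars.map f).card_add_card_le hcount hsides
  rw [card_map, card_map, hs, ht] at hcard
  omega

/-- For every odd integer `m ≥ 9`, the incidence graph of `ℙ²(𝔽₄)` contains no induced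
subgraph isomorphic to `D̃ₘ`. -/
theorem no_induced_DTilde_odd (m : ℕ) (hm : 9 ≤ m) (hodd : Odd m) :
    ¬ HasInducedCopy (DTilde m) IncGraph := by
  rw [incGraph_eq_incidenceGraph]
  exact no_induced_DTilde_odd_general (fun l ↦ (pointCount_projLine l).le) m hm hodd
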